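/- arXiv:2011.05006 — 2 statements merged into one kernel-verified Lean document; each statement's English description precedes it below -/
import Mathlib

section
/- For every real number q with 0 < q < 1, one has S_even(q⁴, q+q⁻¹) = Π_{j≥1} 1/(1 − q^{2j}), the infinite product converging absolutely. -/
/-!
The weight `q̃ ^ A * t ^ B` is a product of one factor per site, equal to `1` wherever a sequence
follows the ground pattern `0, 1, 0, 1, …`. Truncate by keeping the sequences that follow this
pattern from index `N` on and have a nonzero letter just before, and let `z N` be their total
weight and `y N` the total weight when the last condition is dropped. A nonzero letter may be
appended to every word, a zero only after a nonzero letter. If `c N` is the total weight of the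
nonzero letters at index `N` and `d N` the weight of the letter zero, then
`z (N + 1) = c N * y N` and `y (N + 1) = c N * y N + d N * z N`.

At `q̃ = q ^ 4` and `t = q + q⁻¹` one has `q̃ * t ^ 2 = q ^ 2 * (1 + q ^ 2) ^ 2`, and the factors
`1 + q ^ (2 * N + 2)` of `1 - q̃ ^ (N + 1)` cancel against those of `y N`. The recursion then has a
product solution, in which `z (2 * M)` is exactly the partial product of `(1 - q ^ (2 * j))⁻¹` over
`1 ≤ j ≤ 2 * M`. All terms are non-negative and the truncations exhaust `He`, so the full sum is the
limit of these partial products.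
-/

open scoped BigOperators

/-- `He` is the set of sequences `(ω_{-i})_{i ≥ 1}` of non-negative integers (indexed here by
`n : ℕ` with `i = n + 1`) with no two consecutive vanishing entries, agreeing for large `i`
with the sequence which is `1` at even `i` and `0` at odd `i`. -/
def He : Set (ℕ → ℕ) :=
  {ω | (∀ n : ℕ, ¬(ω n = 0 ∧ ω (n + 1) = 0)) ∧
       (∃ N : ℕ, ∀ n ≥ N, ω n = if (n + 1) % 2 = 0 then 1 else 0)}

/-- `Ho` is as `He`, but agreeing for large `i` with the sequence which is `1` at odd `i`
and `0` at even `i`. -/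
def Ho : Set (ℕ → ℕ) :=
  {ω | (∀ n : ℕ, ¬(ω n = 0 ∧ ω (n + 1) = 0)) ∧
       (∃ N : ℕ, ∀ n ≥ N, ω n = if (n + 1) % 2 = 1 then 1 else 0)}

/-- `A(ω) = Σ_{i odd} i·ω_{-i} + Σ_{i even} i·(ω_{-i} − 1)`. -/
noncomputable def Afun (ω : ℕ → ℕ) : ℤ :=
  ∑ᶠ n : ℕ, (if (n + 1) % 2 = 1 then ((n : ℤ) + 1) * (ω n : ℤ)
             else ((n : ℤ) + 1) * ((ω n : ℤ) - 1))

/-- `B(ω) = 2·(Σ_{i odd} 1{ω_{-i} ≥ 1} − Σ_{i even} 1{ω_{-i} = 0})`. -/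
noncomputable def Bfun (ω : ℕ → ℕ) : ℤ :=
  2 * ((∑ᶠ n : ℕ, if (n + 1) % 2 = 1 ∧ 1 ≤ ω n then (1 : ℤ) else 0)
     - (∑ᶠ n : ℕ, if (n + 1) % 2 = 0 ∧ ω n = 0 then (1 : ℤ) else 0))

/-- `A'(ω) = Σ_{i even} i·ω_{-i} + Σ_{i odd} i·(ω_{-i} − 1)`. -/
noncomputable def A'fun (ω : ℕ → ℕ) : ℤ :=
  ∑ᶠ n : ℕ, (if (n + 1) % 2 = 0 then ((n : ℤ) + 1) * (ω n : ℤ)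
             else ((n : ℤ) + 1) * ((ω n : ℤ) - 1))

/-- `B'(ω) = 2·(Σ_{i even} 1{ω_{-i} ≥ 1} − Σ_{i odd} 1{ω_{-i} = 0})`. -/
noncomputable def B'fun (ω : ℕ → ℕ) : ℤ :=
  2 * ((∑ᶠ n : ℕ, if (n + 1) % 2 = 0 ∧ 1 ≤ ω n then (1 : ℤ) else 0)
     - (∑ᶠ n : ℕ, if (n + 1) % 2 = 1 ∧ ω n = 0 then (1 : ℤ) else 0))

/-- `S_even(q̃, t) = Σ_{ω ∈ H_e} q̃^{A(ω)} t^{B(ω)}`. -/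
noncomputable def Seven (q t : ℝ) : ℝ := ∑' ω : He, q ^ Afun ω.1 * t ^ Bfun ω.1

/-- `S_odd(q̃, t) = Σ_{ω ∈ H_o} q̃^{A'(ω)} t^{B'(ω)}`. -/
noncomputable def Sodd (q t : ℝ) : ℝ := ∑' ω : Ho, q ^ A'fun ω.1 * t ^ B'fun ω.1

open Filter Topology Finset

lemma abs_pow_lt_one {R : Type*} [Ring R] [LinearOrder R] [IsStrictOrderedRing R] {a : R}
    (ha : |a| < 1) {n : ℕ} (hn : n ≠ 0) : |a ^ n| < 1 := by
  rw [abs_pow]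
  exact pow_lt_one₀ (abs_nonneg a) ha hn

section PairFreeWords

variable {g : ℕ → ℕ} {N : ℕ}

/-- Words `ω 0, …, ω (N - 1)` without two consecutive zeros, encoded as the sequences that continue
them by the fixed tail `g`. -/
def pairFree (g : ℕ → ℕ) (N : ℕ) : Set (ℕ → ℕ) :=
  {ω | (∀ n, n + 1 < N → ¬(ω n = 0 ∧ ω (n + 1) = 0)) ∧ ∀ n ≥ N, ω n = g n}

/-- The words of `pairFree g N` whose last letter, if there is one, is nonzero; these are the words
to which a zero may be appended. -/
def pairFreeNonzeroLast (g : ℕ → ℕ) (N : ℕ) : Set (ℕ → ℕ) :=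
  {ω ∈ pairFree g N | ∀ n, n + 1 = N → ω n ≠ 0}

/-- The product weight of the first `N` letters of `ω`, where `w n k` is the weight of the letter
`k` at index `n`. -/
def wordWeight {M : Type*} [CommMonoid M] (w : ℕ → ℕ → M) (N : ℕ) (ω : ℕ → ℕ) : M :=
  ∏ n ∈ range N, w n (ω n)

lemma wordWeight_succ_update {M : Type*} [CommMonoid M] (w : ℕ → ℕ → M) (N : ℕ) (ω : ℕ → ℕ)
    (k : ℕ) : wordWeight w (N + 1) (Function.update ω N k) = w N k * wordWeight w N ω := by
  rw [wordWeight, prod_range_succ, Function.update_self, mul_comm, wordWeight]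
  congr 1
  exact prod_congr rfl fun n hn ↦ by rw [Function.update_of_ne (mem_range.1 hn).ne]

/-- Sequences in `T` correspond to a letter in `K` at index `N` and a sequence in `S`, all of whose
members have the placeholder `a` at that index. -/
def updateLetterEquiv {K : Set ℕ} {S T : Set (ℕ → ℕ)} {a : ℕ}
    (hT : ∀ ω, ω ∈ T ↔ ω N ∈ K ∧ Function.update ω N a ∈ S) (hS : ∀ ω ∈ S, ω N = a) :
    K × S ≃ T where
  toFun p := ⟨Function.update p.2 N p.1, (hT _).2 <| by
    simp [← hS p.2 p.2.2]⟩
  invFun ω := (⟨ω.1 N, ((hT ω).1 ω.2).1⟩, ⟨Function.update ω N a, ((hT ω).1 ω.2).2⟩)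
  left_inv p := by simp [← hS p.2 p.2.2]
  right_inv ω := by simp

lemma hasSum_wordWeight_succ {w : ℕ → ℕ → ℝ} (hw : ∀ n k, 0 ≤ w n k) {K : Set ℕ}
    {S T : Set (ℕ → ℕ)} {a : ℕ} {c y : ℝ}
    (hT : ∀ ω, ω ∈ T ↔ ω N ∈ K ∧ Function.update ω N a ∈ S) (hS : ∀ ω ∈ S, ω N = a)
    (hc : HasSum (fun k : K ↦ w N k) c) (hy : HasSum (fun ω : S ↦ wordWeight w N ω) y) :
    HasSum (fun ω : T ↦ wordWeight w (N + 1) ω) (c * y) := by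
  rw [← (updateLetterEquiv hT hS).hasSum_iff]
  have hweight (ω : ℕ → ℕ) : 0 ≤ wordWeight w N ω := prod_nonneg fun n _ ↦ hw n (ω n)
  have hsummable :=
    hc.summable.mul_of_nonneg hy.summable (fun k ↦ hw N k) (fun ω ↦ hweight ω)
  have hpull : (fun ω : T ↦ wordWeight w (N + 1) ω) ∘ updateLetterEquiv hT hS =
      fun p : K × S ↦ w N p.1 * wordWeight w N p.2 :=
    funext fun p ↦ wordWeight_succ_update w N p.2 p.1
  have hprod := hc.mul hy hsummable
  rw [hpull]
  exact hprod

lemma mem_pairFreeNonzeroLast_succ_iff {ω : ℕ → ℕ} :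
    ω ∈ pairFreeNonzeroLast g (N + 1) ↔
      ω N ∈ ({0}ᶜ : Set ℕ) ∧ Function.update ω N (g N) ∈ pairFree g N := by
  simp only [pairFreeNonzeroLast, pairFree, Set.mem_ofPred_eq, Function.update_apply,
    Set.mem_compl_iff, Set.mem_singleton_iff]
  grind

lemma mem_pairFree_succ_and_eq_zero_iff {ω : ℕ → ℕ} :
    ω ∈ pairFree g (N + 1) ∧ ω N = 0 ↔
      ω N ∈ ({0} : Set ℕ) ∧ Function.update ω N (g N) ∈ pairFreeNonzeroLast g N := by
  simp only [pairFreeNonzeroLast, pairFree, Set.mem_ofPred_eq, Function.update_apply,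
    Set.mem_singleton_iff]
  grind

lemma pairFree_succ_eq_union :
    pairFree g (N + 1) =
      pairFreeNonzeroLast g (N + 1) ∪ {ω ∈ pairFree g (N + 1) | ω N = 0} := by
  ext ω
  simp only [pairFreeNonzeroLast, Set.mem_union, Set.mem_ofPred_eq]
  grind

/-- `y` and `z` are the total weights of `pairFree g N` and of `pairFreeNonzeroLast g N`. -/
def HasWordSums (w : ℕ → ℕ → ℝ) (g : ℕ → ℕ) (N : ℕ) (y z : ℝ) : Prop :=
  HasSum (fun ω : pairFree g N ↦ wordWeight w N ω) y ∧
    HasSum (fun ω : pairFreeNonzeroLast g N ↦ wordWeight w N ω) z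

lemma hasWordSums_zero (w : ℕ → ℕ → ℝ) (g : ℕ → ℕ) : HasWordSums w g 0 1 1 := by
  have hfree : pairFree g 0 = {g} := by
    ext ω
    simp [pairFree, funext_iff]
  have hlast : pairFreeNonzeroLast g 0 = {g} := by
    simp [pairFreeNonzeroLast, hfree]
  rw [HasWordSums, hfree, hlast]
  simp [wordWeight]

lemma HasWordSums.succ {w : ℕ → ℕ → ℝ} (hw : ∀ n k, 0 ≤ w n k) {c y z : ℝ}
    (h : HasWordSums w g N y z) (hc : HasSum (fun k ↦ w N (k + 1)) c) :
    HasWordSums w g (N + 1) (c * y + w N 0 * z) (c * y) := by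
  have hc' : HasSum (fun k : ({0}ᶜ : Set ℕ) ↦ w N k) c := by
    have hrange : Set.range Nat.succ = {0}ᶜ := by
      rw [Nat.range_succ]
      ext k
      exact Nat.pos_iff_ne_zero
    rw [← hrange]
    exact Nat.succ_injective.hasSum_range_iff.2 hc
  have hnonzero := hasSum_wordWeight_succ hw (fun _ ↦ mem_pairFreeNonzeroLast_succ_iff)
    (fun ω hω ↦ hω.2 N le_rfl) hc' h.1
  have hzero := hasSum_wordWeight_succ hw (T := {ω ∈ pairFree g (N + 1) | ω N = 0})
    (fun _ ↦ mem_pairFree_succ_and_eq_zero_iff)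
    (fun ω hω ↦ hω.1.2 N le_rfl) (hasSum_singleton 0 (w N)) h.2
  have hdisj : Disjoint (pairFreeNonzeroLast g (N + 1)) {ω ∈ pairFree g (N + 1) | ω N = 0} :=
    Set.disjoint_left.2 fun ω hω hω' ↦ hω.2 N rfl hω'.2
  refine ⟨?_, hnonzero⟩
  rw [pairFree_succ_eq_union]
  exact HasSum.add_disjoint (f := wordWeight w (N + 1)) hdisj hnonzero hzero

end PairFreeWords

section SiteWeights

/-- The factor of `x ^ A(ω) * t ^ B(ω)` contributed by the value `ω n = k`. -/
noncomputable def siteWeight (x t : ℝ) (n k : ℕ) : ℝ :=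
  if (n + 1) % 2 = 1 then x ^ ((n + 1) * k) * (if k = 0 then 1 else t ^ 2)
  else x ^ (((n : ℤ) + 1) * ((k : ℤ) - 1)) * (if k = 0 then (t ^ 2)⁻¹ else 1)

lemma siteWeight_nonneg {x : ℝ} (hx : 0 ≤ x) (t : ℝ) (n k : ℕ) : 0 ≤ siteWeight x t n k := by
  unfold siteWeight
  split_ifs <;> positivity

lemma siteWeight_even_zero (x t : ℝ) (M : ℕ) : siteWeight x t (2 * M) 0 = 1 := by
  have hodd : (2 * M + 1) % 2 = 1 := by omega
  simp [siteWeight, hodd]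

lemma siteWeight_odd_zero (x t : ℝ) (M : ℕ) :
    siteWeight x t (2 * M + 1) 0 = (x ^ (2 * M + 2) * t ^ 2)⁻¹ := by
  have hexp : ((2 * M + 1 : ℕ) + 1 : ℤ) * ((0 : ℕ) - 1) = -(2 * M + 2 : ℕ) := by push_cast; ring
  have heven : ¬(2 * M + 1 + 1) % 2 = 1 := by omega
  rw [siteWeight, if_neg heven, if_pos rfl, hexp, zpow_neg, zpow_natCast, mul_inv]

lemma hasSum_siteWeight_even {x : ℝ} (hx : |x| < 1) (t : ℝ) (M : ℕ) :
    HasSum (fun k ↦ siteWeight x t (2 * M) (k + 1))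
      (x ^ (2 * M + 1) * t ^ 2 * (1 - x ^ (2 * M + 1))⁻¹) := by
  have hr : |x ^ (2 * M + 1)| < 1 := abs_pow_lt_one hx (by omega)
  refine ((hasSum_geometric_of_abs_lt_one hr).mul_left _).congr_fun fun k ↦ ?_
  have hodd : (2 * M + 1) % 2 = 1 := by omega
  rw [siteWeight, if_pos hodd, if_neg k.succ_ne_zero]
  ring

lemma hasSum_siteWeight_odd {x : ℝ} (hx : |x| < 1) (t : ℝ) (M : ℕ) :
    HasSum (fun k ↦ siteWeight x t (2 * M + 1) (k + 1)) (1 - x ^ (2 * M + 2))⁻¹ := by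
  have hr : |x ^ (2 * M + 2)| < 1 := abs_pow_lt_one hx (by omega)
  refine (hasSum_geometric_of_abs_lt_one hr).congr_fun fun k ↦ ?_
  have hexp : ((2 * M + 1 : ℕ) + 1 : ℤ) * ((k + 1 : ℕ) - 1) = ((2 * M + 2) * k : ℕ) := by
    push_cast; ring
  have heven : ¬(2 * M + 1 + 1) % 2 = 1 := by omega
  rw [siteWeight, if_neg heven, if_neg k.succ_ne_zero, hexp, zpow_natCast, mul_one, pow_mul]

variable {q : ℝ}

lemma hasWordSums_siteWeight_odd_of_even (hq0 : q ≠ 0) (hq1 : |q| < 1) {g : ℕ → ℕ} {M : ℕ} {P : ℝ}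
    (h : HasWordSums (siteWeight (q ^ 4) (q + q⁻¹)) g (2 * M)
      (P * ((1 + q ^ (4 * M + 2)) / (q ^ (4 * M) * (1 + q ^ 2)))) P) :
    HasWordSums (siteWeight (q ^ 4) (q + q⁻¹)) g (2 * M + 1)
      (P * (1 - q ^ (4 * M + 2))⁻¹ * (1 + q ^ (4 * M + 4)))
      (P * (1 - q ^ (4 * M + 2))⁻¹ * (q ^ (4 * M + 2) * (1 + q ^ 2))) := by
  have hx : |q ^ 4| < 1 := abs_pow_lt_one hq1 (by omega)
  have hv : |q ^ (4 * M + 2)| < 1 := abs_pow_lt_one hq1 (by omega)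
  have hminus : 1 - q ^ (4 * M + 2) ≠ 0 := by grind
  have hplus : 1 + q ^ (4 * M + 2) ≠ 0 := by grind
  have hfactor : 1 - (q ^ 4) ^ (2 * M + 1) = (1 - q ^ (4 * M + 2)) * (1 + q ^ (4 * M + 2)) := by
    ring
  have hsucc := h.succ (siteWeight_nonneg (by positivity) _) (hasSum_siteWeight_even hx _ M)
  rw [hfactor, siteWeight_even_zero] at hsucc
  convert hsucc using 1
  · field_simp
    ring
  · field_simp
    ring

lemma hasWordSums_siteWeight_even_of_odd (hq0 : q ≠ 0) (hq1 : |q| < 1) {g : ℕ → ℕ} {M : ℕ} {P : ℝ}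
    (h : HasWordSums (siteWeight (q ^ 4) (q + q⁻¹)) g (2 * M + 1)
      (P * (1 + q ^ (4 * M + 4))) (P * (q ^ (4 * M + 2) * (1 + q ^ 2)))) :
    HasWordSums (siteWeight (q ^ 4) (q + q⁻¹)) g (2 * M + 2)
      (P * (1 - q ^ (4 * M + 4))⁻¹ * ((1 + q ^ (4 * M + 6)) / (q ^ (4 * M + 4) * (1 + q ^ 2))))
      (P * (1 - q ^ (4 * M + 4))⁻¹) := by
  have hx : |q ^ 4| < 1 := abs_pow_lt_one hq1 (by omega)
  have hv : |q ^ (4 * M + 4)| < 1 := abs_pow_lt_one hq1 (by omega)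
  have hminus : 1 - q ^ (4 * M + 4) ≠ 0 := by grind
  have hplus : 1 + q ^ (4 * M + 4) ≠ 0 := by grind
  have hfactor : 1 - (q ^ 4) ^ (2 * M + 2) = (1 - q ^ (4 * M + 4)) * (1 + q ^ (4 * M + 4)) := by
    ring
  have hsucc := h.succ (siteWeight_nonneg (by positivity) _) (hasSum_siteWeight_odd hx _ M)
  rw [hfactor, siteWeight_odd_zero] at hsucc
  convert hsucc using 1
  · field_simp
    ring
  · field_simp

lemma hasWordSums_siteWeight_even (hq0 : q ≠ 0) (hq1 : |q| < 1) (g : ℕ → ℕ) (M : ℕ) :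
    HasWordSums (siteWeight (q ^ 4) (q + q⁻¹)) g (2 * M)
      ((∏ j ∈ range (2 * M), (1 - q ^ (2 * (j + 1)))⁻¹) *
        ((1 + q ^ (4 * M + 2)) / (q ^ (4 * M) * (1 + q ^ 2))))
      (∏ j ∈ range (2 * M), (1 - q ^ (2 * (j + 1)))⁻¹) := by
  induction M with
  | zero =>
    have hq2 : 1 + q ^ 2 ≠ 0 := by positivity
    simpa [hq2] using hasWordSums_zero (siteWeight (q ^ 4) (q + q⁻¹)) g
  | succ M ih =>
    have h := hasWordSums_siteWeight_even_of_odd hq0 hq1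
      (hasWordSums_siteWeight_odd_of_even hq0 hq1 ih)
    rw [show 2 * (M + 1) = 2 * M + 1 + 1 by ring, prod_range_succ, prod_range_succ]
    convert h using 3 <;> ring_nf

end SiteWeights

section GroundState

/-- The sequence `0, 1, 0, 1, …` that every `ω ∈ He` eventually follows. -/
def groundTail (n : ℕ) : ℕ := if (n + 1) % 2 = 0 then 1 else 0

lemma mem_pairFreeNonzeroLast_groundTail_iff {M : ℕ} {ω : ℕ → ℕ} :
    ω ∈ pairFreeNonzeroLast groundTail (2 * M) ↔ ω ∈ He ∧ ∀ n ≥ 2 * M, ω n = groundTail n := by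
  simp only [pairFreeNonzeroLast, pairFree, He, groundTail, Set.mem_ofPred_eq]
  constructor
  · rintro ⟨⟨hfree, htail⟩, hlast⟩
    exact ⟨⟨by grind, 2 * M, htail⟩, htail⟩
  · grind

lemma eventually_mem_pairFreeNonzeroLast_groundTail {ω : ℕ → ℕ} (hω : ω ∈ He) :
    ∀ᶠ M in atTop, ω ∈ pairFreeNonzeroLast groundTail (2 * M) := by
  obtain ⟨N, hN⟩ := hω.2
  filter_upwards [eventually_ge_atTop N] with M hM
  exact mem_pairFreeNonzeroLast_groundTail_iff.2 ⟨hω, fun n hn ↦ hN n (by omega)⟩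

lemma finsum_nat_eq_sum_range {M : Type*} [AddCommMonoid M] {f : ℕ → M} {N : ℕ}
    (hf : ∀ n ≥ N, f n = 0) : ∑ᶠ n, f n = ∑ n ∈ range N, f n :=
  finsum_eq_sum_of_support_subset f fun n hn ↦ by
    by_contra hN
    exact hn (hf n (by simpa using hN))

lemma zpow_sum₀ {ι G₀ : Type*} [CommGroupWithZero G₀] {x : G₀} (hx : x ≠ 0) (s : Finset ι)
    (f : ι → ℤ) : x ^ ∑ i ∈ s, f i = ∏ i ∈ s, x ^ f i := by
  classical
  induction s using Finset.induction_on with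
  | empty => simp
  | insert i s hi ih => rw [sum_insert hi, prod_insert hi, zpow_add₀ hx, ih]

lemma zpow_Afun_mul_zpow_Bfun {x t : ℝ} (hx : x ≠ 0) (ht : t ≠ 0) {N : ℕ} {ω : ℕ → ℕ}
    (hω : ∀ n ≥ N, ω n = groundTail n) :
    x ^ Afun ω * t ^ Bfun ω = wordWeight (siteWeight x t) N ω := by
  unfold Afun Bfun
  rw [finsum_nat_eq_sum_range (N := N), finsum_nat_eq_sum_range (N := N),
    finsum_nat_eq_sum_range (N := N), ← sum_sub_distrib, mul_sum, zpow_sum₀ hx, zpow_sum₀ ht,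
    ← prod_mul_distrib, wordWeight]
  · refine prod_congr rfl fun n _ ↦ ?_
    have hpow : x ^ (((n : ℤ) + 1) * (ω n : ℤ)) = x ^ ((n + 1) * ω n) := by norm_cast
    have hneg : t ^ (-2 : ℤ) = (t ^ 2)⁻¹ := by norm_cast
    have hsq : t ^ (2 : ℤ) = t ^ 2 := by norm_cast
    rcases Nat.mod_two_eq_zero_or_one (n + 1) with hn | hn <;> by_cases hk : ω n = 0 <;>
      simp [siteWeight, hn, hk, Nat.one_le_iff_ne_zero, hneg, hsq, hpow]
  all_goals
    intro n hn
    rcases Nat.mod_two_eq_zero_or_one (n + 1) with hpar | hpar <;>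
      simp [hω n hn, groundTail, hpar]

lemma hasSum_pairFreeNonzeroLast_groundTail {q : ℝ} (hq0 : q ≠ 0) (hq1 : |q| < 1) (M : ℕ) :
    HasSum (fun ω : pairFreeNonzeroLast groundTail (2 * M) ↦
      (q ^ 4) ^ Afun ω * (q + q⁻¹) ^ Bfun ω) (∏ j ∈ range (2 * M), (1 - q ^ (2 * (j + 1)))⁻¹) := by
  have ht : q + q⁻¹ ≠ 0 := by
    have hquot : q + q⁻¹ = (q ^ 2 + 1) / q := by field_simp
    rw [hquot]
    positivity
  exact (hasWordSums_siteWeight_even hq0 hq1 groundTail M).2.congr_fun fun ω ↦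
    zpow_Afun_mul_zpow_Bfun (pow_ne_zero 4 hq0) ht
      (mem_pairFreeNonzeroLast_groundTail_iff.1 ω.2).2

end GroundState

section Limit

lemma hasSum_subtype_of_tendsto {α ι : Type*} {l : Filter ι} [l.NeBot] {f : α → ℝ} {T : Set α}
    {S : ι → Set α} {a : ι → ℝ} {b : ℝ} (hf : ∀ x ∈ T, 0 ≤ f x) (hST : ∀ i, S i ⊆ T)
    (hT : ∀ x ∈ T, ∀ᶠ i in l, x ∈ S i) (hS : ∀ i, HasSum (fun x : S i ↦ f x) (a i))
    (ha : Tendsto a l (𝓝 b)) : HasSum (fun x : T ↦ f x) b := by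
  have hind (i : ι) : HasSum (fun x : T ↦ (S i).indicator f x) (a i) := by
    have hsupport : Function.support ((S i).indicator f) ⊆ T :=
      Set.support_indicator_subset.trans (hST i)
    exact (hasSum_subtype_iff_of_support_subset hsupport).2 (hasSum_subtype_iff_indicator.1 (hS i))
  have hind_nonneg (i : ι) (x : T) : 0 ≤ (S i).indicator f x :=
    Set.indicator_nonneg (fun y hy ↦ hf y (hST i hy)) x
  have hlim (x : T) : Tendsto (fun i ↦ (S i).indicator f x) l (𝓝 (f x)) :=
    tendsto_const_nhds.congr' <| (hT x x.2).mono fun i hi ↦ (Set.indicator_of_mem hi f).symm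
  have hsummable : Summable fun x : T ↦ f x := by
    refine summable_of_sum_le (c := b) (fun x ↦ hf x x.2) fun u ↦ ?_
    exact le_of_tendsto_of_tendsto' (tendsto_finsetSum u fun x _ ↦ hlim x) ha
      fun i ↦ sum_le_hasSum u (fun x _ ↦ hind_nonneg i x) (hind i)
  have htsum : Tendsto (fun i ↦ ∑' x : T, (S i).indicator f x) l (𝓝 (∑' x : T, f x)) := by
    refine tendsto_tsum_of_dominated_convergence hsummable hlim (.of_forall fun i x ↦ ?_)
    rw [Real.norm_of_nonneg (hind_nonneg i x)]
    exact Set.indicator_apply_le' (fun _ ↦ le_rfl) fun _ ↦ hf x x.2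
  simp only [(hind _).tsum_eq] at htsum
  exact tendsto_nhds_unique ha htsum ▸ hsummable.hasSum

lemma multipliable_inv_one_sub {ι K : Type*} [NormedField K] [CompleteSpace K] {f : ι → K}
    (hf : Summable fun i ↦ ‖f i‖) (hf1 : ∀ i, f i ≠ 1) : Multipliable fun i ↦ (1 - f i)⁻¹ := by
  have hneg : Summable fun i ↦ ‖-f i‖ := by simpa only [norm_neg] using hf
  simp only [sub_eq_add_neg]
  refine (multipliable_one_add_of_summable hneg).inv₀ (tprod_one_add_ne_zero_of_summable ?_ hneg)
  intro i hi
  exact hf1 i (add_neg_eq_zero.1 hi).symm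

lemma multipliable_inv_one_sub_pow {ι K : Type*} [NormedField K] [CompleteSpace K] {q : K}
    (hq : ‖q‖ < 1) {e : ι → ℕ} (he : Function.Injective e) (he0 : ∀ i, e i ≠ 0) :
    Multipliable fun i ↦ (1 - q ^ e i)⁻¹ := by
  refine multipliable_inv_one_sub ?_ fun i hi ↦ ?_
  · simp only [norm_pow]
    exact (summable_geometric_of_lt_one (norm_nonneg q) hq).comp_injective he
  · have hlt : ‖q‖ ^ e i < 1 := pow_lt_one₀ (norm_nonneg q) hq (he0 i)
    rw [← norm_pow, hi, norm_one] at hlt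
    exact lt_irrefl 1 hlt

end Limit

theorem statement5_general (q : ℝ) (hq0 : q ≠ 0) (hq1 : |q| < 1) :
    Multipliable (fun j : ℕ ↦ (1 - q ^ (2 * (j + 1)))⁻¹) ∧
    HasSum (fun ω : He ↦ (q ^ 4) ^ Afun ω.1 * (q + q⁻¹) ^ Bfun ω.1)
      (∏' j : ℕ, (1 - q ^ (2 * (j + 1)))⁻¹) := by
  have hmul : Multipliable fun j : ℕ ↦ (1 - q ^ (2 * (j + 1)))⁻¹ :=
    multipliable_inv_one_sub_pow hq1 (fun i j h ↦ by simpa using h) (by simp)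
  have hnonneg (ω : ℕ → ℕ) : 0 ≤ (q ^ 4) ^ Afun ω * (q + q⁻¹) ^ Bfun ω :=
    mul_nonneg (zpow_nonneg (by positivity) _) ((even_two_mul _).zpow_nonneg _)
  have hpartial := hmul.hasProd.tendsto_prod_nat.comp (tendsto_id.const_mul_atTop' two_pos)
  exact ⟨hmul, hasSum_subtype_of_tendsto (T := He)
    (f := fun ω ↦ (q ^ 4) ^ Afun ω * (q + q⁻¹) ^ Bfun ω) (fun ω _ ↦ hnonneg ω)
    (fun M ω hω ↦ (mem_pairFreeNonzeroLast_groundTail_iff.1 hω).1)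
    (fun ω hω ↦ eventually_mem_pairFreeNonzeroLast_groundTail hω)
    (hasSum_pairFreeNonzeroLast_groundTail hq0 hq1) hpartial⟩

theorem statement5 (q : ℝ) (hq0 : 0 < q) (hq1 : q < 1) :
    Multipliable (fun j : ℕ => (1 - q ^ (2 * (j + 1)))⁻¹) ∧
    Seven (q ^ 4) (q + q⁻¹) = ∏' j : ℕ, (1 - q ^ (2 * (j + 1)))⁻¹ := by
  obtain ⟨hmul, hsum⟩ := statement5_general q hq0.ne' (by rwa [abs_of_pos hq0])
  exact ⟨hmul, hsum.tsum_eq⟩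
end

section
/- For every real number q with 0 < q < 1, one has S_odd(q⁴, q+q⁻¹) = 1/((1+q²)·Π_{j≥1}(1 − q^{2j})), the infinite product converging absolutely. -/
/-! Cutting the sequences off at index `2N`, beyond which they agree with the ground state, turns
the sum into a transfer-matrix recursion in `N`. With `x = q̃`, the solution is `1 - x^(2N+1)`
times the finite theta sum `Σ_j c_j x^(j(j+1)) / ((x; x)_{N-j} (x; x)_{N+1+j})`, where `c` is the
Chebyshev sequence `c_{j+1} + c_{j-1} = (t² - 2) c_j` with `c_{-1} = 0` and `c_0 = 1`. As `N → ∞`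
this tends to `Σ_j c_j x^(j(j+1)) / (x; x)_∞²`, a theta series which the Jacobi triple product
evaluates. The triple product is in turn the limit of the same finite sum over the base `x²`, whose
recurrence is of first order. At `t = q + q⁻¹` one has `t² - 2 = q² + q⁻²`, so every factor of the
product splits, and Euler's `(-y; y)_∞ (y; y)_∞ = (y²; y²)_∞` cancels all but
`(1 + q²) (q²; q²)_∞`. -/

open scoped BigOperators

open Filter Topology

section QPochhammer

variable {𝕜 : Type*} [NormedField 𝕜] {z : 𝕜}

/-- The `q`-Pochhammer symbol `(z; z)_n`. -/
def qPoch (z : 𝕜) (n : ℕ) : 𝕜 := ∏ i ∈ Finset.range n, (1 - z ^ (i + 1))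

/-- The infinite `q`-Pochhammer symbol `(z; z)_∞`. -/
noncomputable def qPochInf (z : 𝕜) : 𝕜 := ∏' i : ℕ, (1 - z ^ (i + 1))

/-- The reciprocal `1 / (z; z)_n`, set to `0` for `n < 0`, so that the sums over `ℤ` in which it
occurs are finite. -/
noncomputable def invQPoch (z : 𝕜) (n : ℤ) : 𝕜 := if n < 0 then 0 else (qPoch z n.toNat)⁻¹

lemma norm_sq_lt_one (hz : ‖z‖ < 1) : ‖z ^ 2‖ < 1 :=
  norm_pow z 2 ▸ pow_lt_one₀ (norm_nonneg z) hz two_ne_zero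

lemma one_sub_pow_succ_ne_zero (hz : ‖z‖ < 1) (n : ℕ) : 1 - z ^ (n + 1) ≠ 0 := fun h => by
  have hlt : ‖z ^ (n + 1)‖ < 1 := norm_pow z _ ▸ pow_lt_one₀ (norm_nonneg z) hz n.succ_ne_zero
  simp [← sub_eq_zero.1 h] at hlt

lemma qPoch_succ (z : 𝕜) (n : ℕ) : qPoch z (n + 1) = qPoch z n * (1 - z ^ (n + 1)) :=
  Finset.prod_range_succ _ _

lemma invQPoch_of_neg (z : 𝕜) {n : ℤ} (hn : n < 0) : invQPoch z n = 0 := if_pos hn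

lemma invQPoch_natCast (z : 𝕜) (n : ℕ) : invQPoch z n = (qPoch z n)⁻¹ := by
  simp [invQPoch]

lemma invQPoch_sub_one (hz : ‖z‖ < 1) (n : ℤ) :
    invQPoch z (n - 1) = (1 - z ^ n) * invQPoch z n := by
  rcases lt_trichotomy n 0 with hn | rfl | hn
  · rw [invQPoch_of_neg z hn, invQPoch_of_neg z (by omega), mul_zero]
  · simp [invQPoch_of_neg]
  · obtain ⟨m, rfl⟩ : ∃ m : ℕ, n = (m + 1 : ℕ) := ⟨(n - 1).toNat, by omega⟩
    rw [show ((m + 1 : ℕ) : ℤ) - 1 = m by push_cast; ring, invQPoch_natCast, invQPoch_natCast,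
      qPoch_succ, zpow_natCast, mul_inv, mul_left_comm,
      mul_inv_cancel₀ (one_sub_pow_succ_ne_zero hz m), mul_one]

lemma summable_norm_mul_pow (a : 𝕜) (hz : ‖z‖ < 1) : Summable fun i : ℕ => ‖a * z ^ i‖ := by
  simpa only [norm_mul, norm_pow] using
    (summable_geometric_of_lt_one (norm_nonneg z) hz).mul_left ‖a‖

lemma multipliable_one_add_mul_pow [CompleteSpace 𝕜] (a : 𝕜) (hz : ‖z‖ < 1) :
    Multipliable fun i : ℕ => 1 + a * z ^ i :=
  multipliable_one_add_of_summable (summable_norm_mul_pow a hz)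

lemma multipliable_one_sub_pow_succ [CompleteSpace 𝕜] (hz : ‖z‖ < 1) :
    Multipliable fun i : ℕ => 1 - z ^ (i + 1) := by
  simpa only [pow_succ', neg_mul, ← sub_eq_add_neg] using multipliable_one_add_mul_pow (-z) hz

lemma multipliable_one_add_pow_succ [CompleteSpace 𝕜] (hz : ‖z‖ < 1) :
    Multipliable fun i : ℕ => 1 + z ^ (i + 1) := by
  simpa only [pow_succ'] using multipliable_one_add_mul_pow z hz

lemma multipliable_one_add_mul_pow_succ_add_sq [CompleteSpace 𝕜] (u : 𝕜) (hz : ‖z‖ < 1) :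
    Multipliable fun i : ℕ => 1 + u * z ^ (i + 1) + (z ^ (i + 1)) ^ 2 := by
  have hz2 : ‖z ^ 2‖ < 1 := norm_sq_lt_one hz
  have hsum := (summable_norm_mul_pow (u * z) hz).add (summable_norm_mul_pow (z ^ 2) hz2)
  refine (multipliable_one_add_of_summable (f := fun i : ℕ => u * z * z ^ i + z ^ 2 * (z ^ 2) ^ i)
    (hsum.of_nonneg_of_le (fun i => norm_nonneg _) fun i => norm_add_le _ _)).congr fun i => ?_
  ring

lemma qPochInf_ne_zero [CompleteSpace 𝕜] (hz : ‖z‖ < 1) : qPochInf z ≠ 0 := by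
  have h := tprod_one_add_ne_zero_of_summable (f := fun i : ℕ => -z * z ^ i)
    (fun i => by simpa [pow_succ', sub_eq_add_neg] using one_sub_pow_succ_ne_zero hz i)
    (summable_norm_mul_pow (-z) hz)
  simpa only [qPochInf, pow_succ', neg_mul, ← sub_eq_add_neg] using h

lemma tendsto_qPoch [CompleteSpace 𝕜] (hz : ‖z‖ < 1) :
    Tendsto (qPoch z) atTop (𝓝 (qPochInf z)) :=
  (multipliable_one_sub_pow_succ hz).tendsto_prod_tprod_nat

lemma tendsto_inv_qPoch [CompleteSpace 𝕜] (hz : ‖z‖ < 1) :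
    Tendsto (fun n => (qPoch z n)⁻¹) atTop (𝓝 (qPochInf z)⁻¹) :=
  (tendsto_qPoch hz).inv₀ (qPochInf_ne_zero hz)

lemma tendsto_invQPoch [CompleteSpace 𝕜] (hz : ‖z‖ < 1) :
    Tendsto (invQPoch z) atTop (𝓝 (qPochInf z)⁻¹) := by
  have h : Tendsto Int.toNat atTop atTop :=
    tendsto_atTop.2 fun b => (eventually_ge_atTop (b : ℤ)).mono fun n hn => by omega
  refine ((tendsto_inv_qPoch hz).comp h).congr' ?_
  filter_upwards [eventually_ge_atTop 0] with n hn
  rw [invQPoch, if_neg hn.not_gt, Function.comp]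

lemma exists_norm_invQPoch_le [CompleteSpace 𝕜] (hz : ‖z‖ < 1) :
    ∃ C, ∀ n, ‖invQPoch z n‖ ≤ C := by
  obtain ⟨C, hC⟩ :=
    (Metric.isBounded_range_of_tendsto _ (tendsto_inv_qPoch hz)).exists_norm_le
  refine ⟨C, fun n => ?_⟩
  rw [invQPoch]
  split_ifs
  · exact norm_zero.trans_le ((norm_nonneg _).trans (hC _ (Set.mem_range_self 0)))
  · exact hC _ (Set.mem_range_self _)

end QPochhammer

section InfiniteProducts

variable {𝕜 : Type*} [NormedField 𝕜] [CompleteSpace 𝕜] {y z : 𝕜}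

lemma tprod_one_add_pow_succ_mul_qPochInf (hz : ‖z‖ < 1) :
    (∏' i : ℕ, (1 + z ^ (i + 1))) * qPochInf z = qPochInf (z ^ 2) := by
  rw [qPochInf, ← (multipliable_one_add_pow_succ hz).tprod_mul (multipliable_one_sub_pow_succ hz)]
  exact tprod_congr fun i => by ring

lemma tprod_one_add_pow_odd (hy : y ≠ 0) (hy1 : ‖y‖ < 1) :
    ∏' i : ℕ, (1 + y * (y ^ 2) ^ i) = (1 + y) * ∏' k : ℕ,
      (1 + (y + y⁻¹) * ((y ^ 2) ^ 2) ^ (k + 1) + (((y ^ 2) ^ 2) ^ (k + 1)) ^ 2) := by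
  have hy2 : ‖y ^ 2‖ < 1 := norm_sq_lt_one hy1
  have hy4 : ‖(y ^ 2) ^ 2‖ < 1 := norm_sq_lt_one hy2
  have heven : Multipliable fun k : ℕ => 1 + y * (y ^ 2) ^ (2 * k + 1) :=
    (multipliable_one_add_mul_pow (y ^ 3) hy4).congr fun k => by ring
  have hodd : Multipliable fun k : ℕ => 1 + y * (y ^ 2) ^ (2 * k + 1 + 1) :=
    (multipliable_one_add_mul_pow (y ^ 5) hy4).congr fun k => by ring
  have htail : Multipliable fun i : ℕ => 1 + y * (y ^ 2) ^ (i + 1) :=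
    (multipliable_one_add_mul_pow (y ^ 3) hy2).congr fun k => by ring
  rw [tprod_eq_zero_mul' (f := fun i => 1 + y * (y ^ 2) ^ i) htail, pow_zero, mul_one,
    ← tprod_even_mul_odd (f := fun i => 1 + y * (y ^ 2) ^ (i + 1)) heven hodd,
    ← heven.tprod_mul hodd]
  congr 1
  refine tprod_congr fun k => ?_
  field_simp
  ring

lemma tprod_one_add_pow_succ (hy1 : ‖y‖ < 1) :
    ∏' i : ℕ, (1 + y ^ (i + 1)) =
      (∏' i : ℕ, (1 + y * (y ^ 2) ^ i)) * ∏' i : ℕ, (1 + (y ^ 2) ^ (i + 1)) := by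
  have hy2 : ‖y ^ 2‖ < 1 := norm_sq_lt_one hy1
  have heven : Multipliable fun k : ℕ => 1 + y ^ (2 * k + 1) :=
    (multipliable_one_add_mul_pow y hy2).congr fun k => by ring
  have hodd : Multipliable fun k : ℕ => 1 + y ^ (2 * k + 1 + 1) :=
    (multipliable_one_add_pow_succ hy2).congr fun k => by ring
  rw [← tprod_even_mul_odd (f := fun i => 1 + y ^ (i + 1)) heven hodd]
  congr 1 <;> exact tprod_congr fun k => by ring

lemma qPochInf_mul_tprod_div_sq (hy : y ≠ 0) (hy1 : ‖y‖ < 1) :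
    qPochInf ((y ^ 2) ^ 2) * (∏' k : ℕ, (1 + (y + y⁻¹) * ((y ^ 2) ^ 2) ^ (k + 1) +
      (((y ^ 2) ^ 2) ^ (k + 1)) ^ 2)) / qPochInf (y ^ 2) ^ 2 = ((1 + y) * qPochInf y)⁻¹ := by
  have hy2 : ‖y ^ 2‖ < 1 := norm_sq_lt_one hy1
  have hE := tprod_one_add_pow_succ_mul_qPochInf hy1
  have hE2 := tprod_one_add_pow_succ_mul_qPochInf hy2
  rw [tprod_one_add_pow_succ hy1, tprod_one_add_pow_odd hy hy1] at hE
  set F := ∏' k : ℕ, (1 + (y + y⁻¹) * ((y ^ 2) ^ 2) ^ (k + 1) + (((y ^ 2) ^ 2) ^ (k + 1)) ^ 2)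
  have hne : qPochInf (y ^ 2) ≠ 0 := qPochInf_ne_zero hy2
  have hne' : (1 + y) * qPochInf y ≠ 0 := fun h => hne <| by
    linear_combination -hE + (∏' i : ℕ, (1 + (y ^ 2) ^ (i + 1))) * F * h
  rw [div_eq_iff (pow_ne_zero 2 hne), eq_inv_mul_iff_mul_eq₀ hne', ← hE2]
  linear_combination qPochInf (y ^ 2) * hE

lemma qPochInf_mul_tprod_div_sq_add_inv {q : 𝕜} (hq : q ≠ 0) (hq1 : ‖q‖ < 1) :
    qPochInf ((q ^ 4) ^ 2) * (∏' k : ℕ, (1 + ((q + q⁻¹) ^ 2 - 2) * ((q ^ 4) ^ 2) ^ (k + 1) +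
      (((q ^ 4) ^ 2) ^ (k + 1)) ^ 2)) / qPochInf (q ^ 4) ^ 2 =
        ((1 + q ^ 2) * ∏' j : ℕ, (1 - q ^ (2 * (j + 1))))⁻¹ := by
  have hparam : (q + q⁻¹) ^ 2 - 2 = q ^ 2 + (q ^ 2)⁻¹ := by
    field_simp
    ring
  simp only [hparam, show q ^ 4 = (q ^ 2) ^ 2 by ring, pow_mul q 2]
  exact qPochInf_mul_tprod_div_sq (pow_ne_zero 2 hq) (norm_sq_lt_one hq1)

end InfiniteProducts

lemma summable_pow_mul_pow_mul_succ (M : ℝ) {r : ℝ} (hr0 : 0 ≤ r) (hr1 : r < 1) :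
    Summable fun n : ℕ => M ^ n * r ^ (n * (n + 1)) := by
  have hlim : Tendsto (fun n : ℕ => |M| * r ^ (n + 1)) atTop (𝓝 0) := by
    simpa using ((tendsto_add_atTop_iff_nat 1).2
      (tendsto_pow_atTop_nhds_zero_of_lt_one hr0 hr1)).const_mul |M|
  refine Summable.of_norm_bounded_eventually_nat summable_geometric_two ?_
  filter_upwards [hlim.eventually_le_const (u := 1 / 2) (by norm_num)] with n hn
  rw [Real.norm_eq_abs, abs_mul, abs_pow, abs_of_nonneg (pow_nonneg hr0 _), mul_comm n, pow_mul,
    ← mul_pow]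
  gcongr

section FiniteTheta

variable {𝕜 : Type*} [NormedField 𝕜] {x z u : 𝕜} {c : ℤ → 𝕜}

/-- The kernel `x^(j(j+1)) / ((z; z)_{N-j} (z; z)_{N+1+j})` of the sums `finiteTheta`, which is
non-zero only for `-N-1 ≤ j ≤ N`. -/
noncomputable def thetaKernel (x z : 𝕜) (N j : ℤ) : 𝕜 :=
  x ^ (j * (j + 1)) * (invQPoch z (N - j) * invQPoch z (N + 1 + j))

/-- The finite theta sum `Σ_j c_j x^(j(j+1)) / ((z; z)_{N-j} (z; z)_{N+1+j})`: a two-sided form of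
`β_N` for a Bailey pair `(α, β)` with coefficients `c_j x^(j(j+1))`, relative to `z`. -/
noncomputable def finiteTheta (x z : 𝕜) (c : ℤ → 𝕜) (N : ℤ) : 𝕜 :=
  ∑' j : ℤ, c j * thetaKernel x z N j

/-- The Chebyshev recurrence `c_{j+1} + c_{j-1} = u c_j`. Solutions include `c_j = s^j` for
`u = s + s⁻¹`, as in the classical Jacobi triple product. -/
def IsChebyshevSeq (u : 𝕜) (c : ℤ → 𝕜) : Prop := ∀ j, c (j + 1) + c (j - 1) = u * c j

lemma thetaKernel_eq_zero (x z : 𝕜) {N j : ℤ} (hj : j ∉ Finset.Icc (-N - 1) N) :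
    thetaKernel x z N j = 0 := by
  rw [Finset.mem_Icc] at hj
  obtain h | h : N - j < 0 ∨ N + 1 + j < 0 := by omega
  all_goals simp [thetaKernel, invQPoch_of_neg z h]

lemma hasSum_finiteTheta (x z : 𝕜) (c : ℤ → 𝕜) (N : ℤ) :
    HasSum (fun j => c j * thetaKernel x z N j) (finiteTheta x z c N) :=
  (summable_of_ne_finset_zero (s := Finset.Icc (-N - 1) N) fun j hj => by
    rw [thetaKernel_eq_zero x z hj, mul_zero]).hasSum

lemma finiteTheta_neg_one (x z : 𝕜) (c : ℤ → 𝕜) : finiteTheta x z c (-1) = 0 := by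
  have h (j : ℤ) : thetaKernel x z (-1) j = 0 := thetaKernel_eq_zero x z (by simp)
  simp [finiteTheta, h]

lemma finiteTheta_zero (x z : 𝕜) (c : ℤ → 𝕜) :
    finiteTheta x z c 0 = (c 0 + c (-1)) * (1 - z)⁻¹ := by
  rw [finiteTheta, tsum_eq_sum (s := {0, -1}) fun j hj => by
    rw [thetaKernel_eq_zero x z (by simp at hj ⊢; omega), mul_zero]]
  simp [thetaKernel, invQPoch, qPoch, add_mul]

lemma hasSum_mul_thetaKernel_shift (hc : IsChebyshevSeq u c) (N : ℤ) :
    HasSum (fun j => c j * (thetaKernel x z N (j - 1) + thetaKernel x z N (j + 1)))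
      (u * finiteTheta x z c N) := by
  have hl := hasSum_finiteTheta x z (fun j => c (j + 1)) N
  have hr := hasSum_finiteTheta x z (fun j => c (j - 1)) N
  have hsum : finiteTheta x z (fun j => c (j + 1)) N + finiteTheta x z (fun j => c (j - 1)) N =
      u * finiteTheta x z c N := by
    refine (hl.add hr).unique (((hasSum_finiteTheta x z c N).mul_left u).congr_fun fun j => ?_)
    rw [← add_mul, hc j, mul_assoc]
  rw [← hsum]
  refine (((Equiv.subRight (1 : ℤ)).hasSum_iff.2 hl).add
    ((Equiv.addRight (1 : ℤ)).hasSum_iff.2 hr)).congr_fun fun j => ?_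
  simp [mul_add]

lemma thetaKernel_sub_one (hz : ‖z‖ < 1) (N j : ℤ) : thetaKernel x z (N - 1) j =
    (1 - z ^ (N - j)) * (1 - z ^ (N + 1 + j)) * thetaKernel x z N j := by
  rw [thetaKernel, thetaKernel, show N - 1 - j = N - j - 1 by ring,
    show N - 1 + 1 + j = N + 1 + j - 1 by ring, invQPoch_sub_one hz, invQPoch_sub_one hz]
  ring

lemma thetaKernel_reflect (x z : 𝕜) (N j : ℤ) :
    thetaKernel x z N (-1 - j) = thetaKernel x z N j := by
  rw [thetaKernel, thetaKernel, show (-1 - j) * (-1 - j + 1) = j * (j + 1) by ring,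
    show N - (-1 - j) = N + 1 + j by ring, show N + 1 + (-1 - j) = N - j by ring,
    mul_comm (invQPoch z (N + 1 + j))]

lemma thetaKernel_sub_one_sub_one (hx : x ≠ 0) (hz : ‖z‖ < 1) (N j : ℤ) :
    thetaKernel x z (N - 1) (j - 1) =
      x ^ (-2 * j) * ((1 - z ^ (N + j)) * (1 - z ^ (N + 1 + j))) * thetaKernel x z N j := by
  rw [thetaKernel, thetaKernel, show N - 1 - (j - 1) = N - j by ring,
    show N - 1 + 1 + (j - 1) = N + 1 + j - 1 - 1 by ring, invQPoch_sub_one hz,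
    invQPoch_sub_one hz, show (j - 1) * (j - 1 + 1) = -2 * j + j * (j + 1) by ring,
    zpow_add₀ hx, show N + 1 + j - 1 = N + j by ring]
  ring

lemma thetaKernel_sub_one_add_one (hx : x ≠ 0) (hz : ‖z‖ < 1) (N j : ℤ) :
    thetaKernel x z (N - 1) (j + 1) =
      x ^ (2 * (j + 1)) * ((1 - z ^ (N - j - 1)) * (1 - z ^ (N - j))) * thetaKernel x z N j := by
  have h := thetaKernel_sub_one_sub_one hx hz N (-1 - j)
  rw [thetaKernel_reflect, show -1 - j - 1 = -1 - (j + 1) by ring, thetaKernel_reflect] at h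
  rw [h, show -2 * (-1 - j) = 2 * (j + 1) by ring, show N + (-1 - j) = N - j - 1 by ring,
    show N + 1 + (-1 - j) = N - j by ring]

lemma thetaKernel_sq_base_recurrence (hx : x ≠ 0) (hz : ‖x ^ 2‖ < 1) (N j : ℤ) :
    (1 - (x ^ (2 * N)) ^ 2) * (1 - x ^ 2 * (x ^ (2 * N)) ^ 2) * thetaKernel x (x ^ 2) N j =
      x ^ (2 * N) * (thetaKernel x (x ^ 2) (N - 1) (j - 1) + thetaKernel x (x ^ 2) (N - 1) (j + 1))
        + (1 + (x ^ (2 * N)) ^ 2) * thetaKernel x (x ^ 2) (N - 1) j := by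
  rw [thetaKernel_sub_one_sub_one hx hz, thetaKernel_sub_one_add_one hx hz,
    thetaKernel_sub_one hz]
  have hsq (m : ℤ) : (x ^ 2) ^ m = (x ^ m) ^ 2 := by
    rw [← zpow_natCast, ← zpow_natCast, zpow_comm]
  have hneg : x ^ (-2 * j) = ((x ^ j) ^ 2)⁻¹ := by
    rw [neg_mul, zpow_neg, zpow_mul, zpow_ofNat, hsq]
  have hpos (m : ℤ) : x ^ (2 * m) = (x ^ m) ^ 2 := by rw [zpow_mul, zpow_ofNat, hsq]
  rw [hneg]
  simp only [hpos, hsq, zpow_add₀ hx, zpow_sub₀ hx, zpow_one]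
  have hY : x ^ j ≠ 0 := zpow_ne_zero j hx
  generalize x ^ N = X
  generalize x ^ j = Y at hY ⊢
  field_simp
  ring

lemma thetaKernel_same_base_recurrence (hx : x ≠ 0) (hx1 : ‖x‖ < 1) (N j : ℤ) :
    (1 - (x ^ N) ^ 2) * ((1 - x * (x ^ N) ^ 2) * thetaKernel x x N j - thetaKernel x x (N - 1) j) =
      (x ^ N) ^ 2 * (thetaKernel x x (N - 1) (j - 1) + thetaKernel x x (N - 1) (j + 1))
        + (x + (x ^ N) ^ 2) * thetaKernel x x (N - 1) j - x * thetaKernel x x (N - 2) j := by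
  rw [thetaKernel_sub_one_sub_one hx hx1, thetaKernel_sub_one_add_one hx hx1,
    show N - 2 = N - 1 - 1 by ring, thetaKernel_sub_one hx1 (N - 1), thetaKernel_sub_one hx1 N]
  have hsq (m : ℤ) : x ^ (2 * m) = (x ^ m) ^ 2 := by
    rw [mul_comm, zpow_mul, zpow_ofNat]
  have hneg : x ^ (-2 * j) = ((x ^ j) ^ 2)⁻¹ := by rw [neg_mul, zpow_neg, hsq]
  rw [hneg]
  simp only [hsq, zpow_add₀ hx, zpow_sub₀ hx, zpow_one]
  have hY : x ^ j ≠ 0 := zpow_ne_zero j hx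
  generalize x ^ N = X
  generalize x ^ j = Y at hY ⊢
  field_simp
  ring

lemma finiteTheta_sq_base_recurrence (hx : x ≠ 0) (hz : ‖x ^ 2‖ < 1) (hc : IsChebyshevSeq u c)
    (N : ℤ) :
    (1 - (x ^ (2 * N)) ^ 2) * (1 - x ^ 2 * (x ^ (2 * N)) ^ 2) * finiteTheta x (x ^ 2) c N =
      (1 + u * x ^ (2 * N) + (x ^ (2 * N)) ^ 2) * finiteTheta x (x ^ 2) c (N - 1) := by
  refine (((hasSum_finiteTheta x (x ^ 2) c N).mul_left _).unique
    ((((hasSum_mul_thetaKernel_shift hc (N - 1)).mul_left (x ^ (2 * N))).add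
      ((hasSum_finiteTheta x (x ^ 2) c (N - 1)).mul_left (1 + (x ^ (2 * N)) ^ 2))).congr_fun
        fun j => ?_)).trans (by ring)
  linear_combination c j * thetaKernel_sq_base_recurrence hx hz N j

lemma finiteTheta_same_base_recurrence (hx : x ≠ 0) (hx1 : ‖x‖ < 1) (hc : IsChebyshevSeq u c)
    (N : ℤ) :
    (1 - (x ^ N) ^ 2) * ((1 - x * (x ^ N) ^ 2) * finiteTheta x x c N - finiteTheta x x c (N - 1)) =
      (x + (u + 1) * (x ^ N) ^ 2) * finiteTheta x x c (N - 1) - x * finiteTheta x x c (N - 2) := by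
  have hsum := hasSum_finiteTheta x x c
  refine (((((hsum N).mul_left (1 - x * (x ^ N) ^ 2)).sub (hsum (N - 1))).mul_left _).unique
    (((((hasSum_mul_thetaKernel_shift hc (N - 1)).mul_left ((x ^ N) ^ 2)).add
      ((hsum (N - 1)).mul_left (x + (x ^ N) ^ 2))).sub ((hsum (N - 2)).mul_left x)).congr_fun
        fun j => ?_)).trans (by ring)
  linear_combination c j * thetaKernel_same_base_recurrence hx hx1 N j

lemma finiteTheta_sq_base_mul_qPoch (hx : x ≠ 0) (hz : ‖x ^ 2‖ < 1) (hc : IsChebyshevSeq u c)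
    (N : ℕ) :
    finiteTheta x (x ^ 2) c N * qPoch (x ^ 2) (2 * N + 1) = (c 0 + c (-1)) *
      ∏ k ∈ Finset.range N, (1 + u * (x ^ 2) ^ (k + 1) + ((x ^ 2) ^ (k + 1)) ^ 2) := by
  induction N with
  | zero =>
    simpa [qPoch, finiteTheta_zero] using
      inv_mul_cancel_right₀ (by simpa using one_sub_pow_succ_ne_zero hz 0) _
  | succ N ih =>
    have hrec := finiteTheta_sq_base_recurrence hx hz hc (N + 1 : ℕ)
    rw [show 2 * ((N + 1 : ℕ) : ℤ) = (2 * (N + 1) : ℕ) by push_cast; ring, zpow_natCast,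
      pow_mul, show ((N + 1 : ℕ) : ℤ) - 1 = N by push_cast; ring] at hrec
    rw [Finset.prod_range_succ, ← mul_assoc, ← ih,
      show 2 * (N + 1) + 1 = 2 * N + 1 + 1 + 1 by ring, qPoch_succ, qPoch_succ]
    linear_combination qPoch (x ^ 2) (2 * N + 1) * hrec

lemma IsChebyshevSeq.reflect (hc : IsChebyshevSeq u c) : IsChebyshevSeq u fun j => c (-1 - j) :=
  fun j => by
    rw [← hc (-1 - j), add_comm (c (-1 - j + 1))]
    congr 2 <;> ring_nf

lemma IsChebyshevSeq.norm_le (hc : IsChebyshevSeq u c) (n : ℕ) :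
    ‖c n‖ ≤ max ‖c 0‖ ‖c (-1)‖ * (‖u‖ + 1) ^ n ∧
      ‖c (n - 1)‖ ≤ max ‖c 0‖ ‖c (-1)‖ * (‖u‖ + 1) ^ n := by
  induction n with
  | zero => simp
  | succ n ih =>
    set K := max ‖c 0‖ ‖c (-1)‖ * (‖u‖ + 1) ^ n
    have hK : max ‖c 0‖ ‖c (-1)‖ * (‖u‖ + 1) ^ (n + 1) = ‖u‖ * K + K := by ring
    have hnext : ‖c (n + 1)‖ ≤ ‖u‖ * ‖c n‖ + ‖c (n - 1)‖ := by
      rw [eq_sub_of_add_eq (hc n), ← norm_mul]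
      exact norm_sub_le _ _
    have hmul : ‖u‖ * ‖c n‖ ≤ ‖u‖ * K :=
      mul_le_mul_of_nonneg_left ih.1 (norm_nonneg u)
    have hnonneg : 0 ≤ ‖u‖ * K := (by positivity : 0 ≤ ‖u‖ * ‖c n‖).trans hmul
    rw [hK, Nat.cast_succ, add_sub_cancel_right]
    exact ⟨by linarith [ih.2], by linarith [ih.1]⟩

lemma IsChebyshevSeq.summable_norm_mul_zpow_nat (hc : IsChebyshevSeq u c) (hx : ‖x‖ < 1) :
    Summable fun n : ℕ => ‖c n * x ^ ((n : ℤ) * (n + 1))‖ := by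
  refine ((summable_pow_mul_pow_mul_succ (‖u‖ + 1) (norm_nonneg x) hx).mul_left
    (max ‖c 0‖ ‖c (-1)‖)).of_nonneg_of_le (fun n => norm_nonneg _) fun n => ?_
  rw [norm_mul, norm_zpow, ← mul_assoc]
  exact mul_le_mul (hc.norm_le n).1 (by norm_cast) (by positivity) (by positivity)

lemma IsChebyshevSeq.summable_norm_mul_zpow (hc : IsChebyshevSeq u c) (hx : ‖x‖ < 1) :
    Summable fun j : ℤ => ‖c j * x ^ (j * (j + 1))‖ := by
  refine .of_nat_of_neg_add_one (hc.summable_norm_mul_zpow_nat hx)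
    ((hc.reflect.summable_norm_mul_zpow_nat hx).congr fun n => ?_)
  rw [show -((n : ℤ) + 1) = -1 - n by ring,
    show (-1 - n : ℤ) * (-1 - n + 1) = n * (n + 1) by ring]

lemma tendsto_finiteTheta [CompleteSpace 𝕜] (hz : ‖z‖ < 1)
    (hsum : Summable fun j : ℤ => ‖c j * x ^ (j * (j + 1))‖) :
    Tendsto (finiteTheta x z c) atTop
      (𝓝 ((∑' j : ℤ, c j * x ^ (j * (j + 1))) * (qPochInf z)⁻¹ ^ 2)) := by
  obtain ⟨C, hC⟩ := exists_norm_invQPoch_le hz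
  rw [← tsum_mul_right]
  refine tendsto_tsum_of_dominated_convergence (hsum.mul_right (C * C)) (fun j => ?_)
    (.of_forall fun N j => ?_)
  · have hl := (tendsto_invQPoch hz).comp (tendsto_atTop_add_const_right _ (-j) tendsto_id)
    have hr := (tendsto_invQPoch hz).comp (tendsto_atTop_add_const_right _ (1 + j) tendsto_id)
    rw [sq]
    refine ((hl.mul hr).const_mul (c j * x ^ (j * (j + 1)))).congr fun N => ?_
    simp only [thetaKernel, Function.comp, id, ← sub_eq_add_neg, ← add_assoc]
    ring
  · rw [thetaKernel, ← mul_assoc, norm_mul _ (_ * _), norm_mul (invQPoch _ _)]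
    exact mul_le_mul_of_nonneg_left (mul_le_mul (hC _) (hC _) (norm_nonneg _)
      ((norm_nonneg _).trans (hC 0))) (norm_nonneg _)

/-- The Jacobi triple product, with a Chebyshev sequence in place of the powers `s^j`. -/
theorem tsum_mul_zpow_mul_succ [CompleteSpace 𝕜] (hx : x ≠ 0) (hx1 : ‖x‖ < 1)
    (hc : IsChebyshevSeq u c) :
    ∑' j : ℤ, c j * x ^ (j * (j + 1)) = (c 0 + c (-1)) * (qPochInf (x ^ 2) *
      ∏' k : ℕ, (1 + u * (x ^ 2) ^ (k + 1) + ((x ^ 2) ^ (k + 1)) ^ 2)) := by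
  have hz : ‖x ^ 2‖ < 1 := norm_sq_lt_one hx1
  have hodd : Tendsto (fun N : ℕ => 2 * N + 1) atTop atTop :=
    tendsto_atTop_mono (fun N => show N ≤ 2 * N + 1 by omega) tendsto_id
  have hleft := ((tendsto_finiteTheta hz (hc.summable_norm_mul_zpow hx1)).comp
    tendsto_natCast_atTop_atTop).mul ((tendsto_qPoch hz).comp hodd)
  have hright := (multipliable_one_add_mul_pow_succ_add_sq u hz).tendsto_prod_tprod_nat.const_mul
    (c 0 + c (-1))
  have hne := qPochInf_ne_zero hz
  have h := tendsto_nhds_unique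
    (hleft.congr fun N => finiteTheta_sq_base_mul_qPoch hx hz hc N) hright
  rw [mul_left_comm, ← h]
  field_simp

lemma tendsto_finiteTheta_same_base [CompleteSpace 𝕜] (hx : x ≠ 0) (hx1 : ‖x‖ < 1)
    (hc : IsChebyshevSeq u c) :
    Tendsto (finiteTheta x x c) atTop (𝓝 ((c 0 + c (-1)) * (qPochInf (x ^ 2) *
      ∏' k : ℕ, (1 + u * (x ^ 2) ^ (k + 1) + ((x ^ 2) ^ (k + 1)) ^ 2)) / qPochInf x ^ 2)) := by
  rw [← tsum_mul_zpow_mul_succ hx hx1 hc, div_eq_mul_inv, ← inv_pow]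
  exact tendsto_finiteTheta hx1 (hc.summable_norm_mul_zpow hx1)

end FiniteTheta

lemma hasSum_iUnion_of_tendsto {α : Type*} {f : α → ℝ} {s : ℕ → Set α} {S : ℕ → ℝ} {L : ℝ}
    (hf : ∀ a, 0 ≤ f a) (hs : Monotone s) (hS : ∀ N, HasSum (fun a : s N => f a) (S N))
    (hL : Tendsto S atTop (𝓝 L)) : HasSum (fun a : ⋃ N, s N => f a) L := by
  replace hS (N) : HasSum ((s N).indicator f) (S N) := hasSum_subtype_iff_indicator.1 (hS N)
  refine hasSum_subtype_iff_indicator.2 (?_ : HasSum ((⋃ N, s N).indicator f) L)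
  have hind (t : Set α) (a : α) : 0 ≤ t.indicator f a := Set.indicator_nonneg (fun a _ => hf a) a
  refine hasSum_of_isLUB_of_nonneg L (hind _) ⟨?_, fun b hb => ?_⟩
  · rintro _ ⟨F, rfl⟩
    have hF : ∀ᶠ N in atTop, ∀ a ∈ F, (⋃ N, s N).indicator f a = (s N).indicator f a := by
      rw [eventually_all_finset]
      intro a _
      by_cases ha : a ∈ ⋃ N, s N
      · obtain ⟨M, hM⟩ := Set.mem_iUnion.1 ha
        filter_upwards [eventually_ge_atTop M] with N hN
        rw [Set.indicator_of_mem ha, Set.indicator_of_mem (hs hN hM)]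
      · refine .of_forall fun N => ?_
        rw [Set.indicator_of_notMem ha,
          Set.indicator_of_notMem fun h => ha (Set.mem_iUnion_of_mem N h)]
    refine ge_of_tendsto hL (hF.mono fun N hN => ?_)
    exact (Finset.sum_congr rfl hN).trans_le (sum_le_hasSum F (fun a _ => hind _ a) (hS N))
  · refine le_of_tendsto' hL fun N => hasSum_le_of_sum_le (hS N) fun F => ?_
    refine (Finset.sum_le_sum fun a _ => ?_).trans (hb ⟨F, rfl⟩)
    exact Set.indicator_le_indicator_of_subset (Set.subset_iUnion s N) hf a

section TransferMatrix

/-- The sequences which agree with `g` from index `m` on and have no two consecutive zeros among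
their first `m` entries. A zero at index `m - 1` followed by `g m = 0` is allowed, which decouples
the first `m` entries from `g`. -/
def admissible (g : ℕ → ℕ) (m : ℕ) : Set (ℕ → ℕ) :=
  {ω | (∀ n ≥ m, ω n = g n) ∧ ∀ n, n + 1 < m → ¬(ω n = 0 ∧ ω (n + 1) = 0)}

/-- The product of the weights `w n (ω n)` of the first `m` entries of `ω`. -/
def prefixWeight (w : ℕ → ℕ → ℝ) (m : ℕ) (ω : ℕ → ℕ) : ℝ := ∏ n ∈ Finset.range m, w n (ω n)

/-- The total weight of the prefixes of length `m` without two consecutive zeros, when a zero at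
index `n` has weight `z n` and the positive entries at index `n` have total weight `p n`. The
recursion removes either a positive last entry, or a zero together with the positive entry that
precedes it. -/
def transferSum (p z : ℕ → ℝ) : ℕ → ℝ
  | 0 => 1
  | 1 => p 0 + z 0
  | m + 2 => p (m + 1) * transferSum p z (m + 1) + z (m + 1) * (p m * transferSum p z m)

variable {g : ℕ → ℕ} {w : ℕ → ℕ → ℝ}

lemma prefixWeight_update_succ (w : ℕ → ℕ → ℝ) (m k : ℕ) (ω : ℕ → ℕ) :
    prefixWeight w (m + 1) (Function.update ω m k) = w m k * prefixWeight w m ω := by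
  rw [prefixWeight, Finset.prod_range_succ, Function.update_self, mul_comm, prefixWeight]
  congr 1
  exact Finset.prod_congr rfl fun n hn => by
    rw [Function.update_of_ne (Finset.mem_range.1 hn).ne]

lemma update_succ_mem_admissible {m k : ℕ} {ω : ℕ → ℕ} (hω : ω ∈ admissible g m) :
    Function.update ω m (k + 1) ∈ admissible g (m + 1) := by
  refine ⟨fun n hn => ?_, fun n hn => ?_⟩
  · rw [Function.update_of_ne (by omega), hω.1 n (by omega)]
  · rw [Function.update_of_ne (by omega : n ≠ m)]
    rcases eq_or_ne (n + 1) m with rfl | h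
    · simp
    · rw [Function.update_of_ne h]
      exact hω.2 n (by omega)

lemma update_zero_mem_admissible {m : ℕ} {ω : ℕ → ℕ} (hω : ω ∈ admissible g (m + 1))
    (hm : ω m ≠ 0) : Function.update ω (m + 1) 0 ∈ admissible g (m + 2) := by
  refine ⟨fun n hn => ?_, fun n hn => ?_⟩
  · rw [Function.update_of_ne (by omega), hω.1 n (by omega)]
  · rw [Function.update_of_ne (by omega : n ≠ m + 1)]
    rcases eq_or_ne n m with rfl | h
    · exact fun h => hm h.1
    · rw [Function.update_of_ne (by omega)]
      exact hω.2 n (by omega)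

lemma update_ground_mem_admissible {m : ℕ} {ω : ℕ → ℕ} (hω : ω ∈ admissible g (m + 1)) :
    Function.update ω m (g m) ∈ admissible g m := by
  refine ⟨fun n hn => ?_, fun n hn => ?_⟩
  · rcases eq_or_ne n m with rfl | h
    · rw [Function.update_self]
    · rw [Function.update_of_ne h, hω.1 n (by omega)]
  · rw [Function.update_of_ne (by omega), Function.update_of_ne (by omega)]
    exact hω.2 n (by omega)

/-- Appending a positive entry `k + 1` to the prefix of an admissible sequence. -/
def appendPosEquiv (g : ℕ → ℕ) (m : ℕ) :
    ℕ × admissible g m ≃ ↥(admissible g (m + 1) ∩ {ω | ω m ≠ 0}) where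
  toFun p := ⟨Function.update p.2 m (p.1 + 1), update_succ_mem_admissible p.2.2, by simp⟩
  invFun ω := (ω.1 m - 1, ⟨Function.update ω.1 m (g m), update_ground_mem_admissible ω.2.1⟩)
  left_inv p := by
    ext n <;> simp [← p.2.2.1 m le_rfl]
  right_inv ω := by
    simp [Nat.sub_add_cancel (Nat.one_le_iff_ne_zero.2 ω.2.2)]

/-- Appending a zero to the prefix of an admissible sequence whose last entry is positive. -/
def appendZeroEquiv (g : ℕ → ℕ) (m : ℕ) :
    ↥(admissible g (m + 1) ∩ {ω | ω m ≠ 0}) ≃ ↥(admissible g (m + 2) ∩ {ω | ω (m + 1) = 0}) where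
  toFun ω := ⟨Function.update ω.1 (m + 1) 0, update_zero_mem_admissible ω.2.1 ω.2.2, by simp⟩
  invFun ω := ⟨Function.update ω.1 (m + 1) (g (m + 1)), update_ground_mem_admissible ω.2.1, by
    have h0 : ω.1 (m + 1) = 0 := ω.2.2
    simpa using fun h => ω.2.1.2 m (by omega) ⟨h, h0⟩⟩
  left_inv ω := by
    simp [← ω.2.1.1 (m + 1) le_rfl]
  right_inv ω := by
    have h0 : ω.1 (m + 1) = 0 := ω.2.2
    ext n
    simp [← h0]

lemma hasSum_admissible_pos {m : ℕ} {P W : ℝ} (hw : ∀ n k, 0 ≤ w n k)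
    (hP : HasSum (fun k => w m (k + 1)) P)
    (hW : HasSum (fun ω : admissible g m => prefixWeight w m ω) W) :
    HasSum (fun ω : ↥(admissible g (m + 1) ∩ {ω | ω m ≠ 0}) => prefixWeight w (m + 1) ω)
      (P * W) := by
  have hweight (ω : ℕ → ℕ) : 0 ≤ prefixWeight w m ω := Finset.prod_nonneg fun n _ => hw n _
  have hsum := hP.summable.mul_of_nonneg hW.summable (fun k => hw m (k + 1)) fun ω => hweight ω
  have hmul := hP.mul hW hsum
  rw [← (appendPosEquiv g m).hasSum_iff]
  exact hmul.congr_fun fun p => prefixWeight_update_succ w m (p.1 + 1) p.2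

lemma hasSum_admissible_zero {m : ℕ} {A : ℝ}
    (hA : HasSum (fun ω : ↥(admissible g (m + 1) ∩ {ω | ω m ≠ 0}) => prefixWeight w (m + 1) ω) A) :
    HasSum (fun ω : ↥(admissible g (m + 2) ∩ {ω | ω (m + 1) = 0}) => prefixWeight w (m + 2) ω)
      (w (m + 1) 0 * A) := by
  rw [← (appendZeroEquiv g m).hasSum_iff]
  exact (hA.mul_left _).congr_fun fun ω => prefixWeight_update_succ w (m + 1) 0 ω

lemma hasSum_admissible_of_pos_of_zero {m : ℕ} {A B : ℝ}
    (hA : HasSum (fun ω : ↥(admissible g (m + 1) ∩ {ω | ω m ≠ 0}) => prefixWeight w (m + 1) ω) A)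
    (hB : HasSum (fun ω : ↥(admissible g (m + 1) ∩ {ω | ω m = 0}) => prefixWeight w (m + 1) ω) B) :
    HasSum (fun ω : admissible g (m + 1) => prefixWeight w (m + 1) ω) (A + B) := by
  have hdisj : Disjoint (admissible g (m + 1) ∩ {ω | ω m ≠ 0})
      (admissible g (m + 1) ∩ {ω | ω m = 0}) :=
    Set.disjoint_left.2 fun ω h h' => h.2 h'.2
  have hunion : admissible g (m + 1) ∩ {ω | ω m ≠ 0} ∪ admissible g (m + 1) ∩ {ω | ω m = 0} =
      admissible g (m + 1) := by
    ext ω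
    simp [← and_or_left, em']
  exact hunion ▸ HasSum.add_disjoint (f := prefixWeight w (m + 1)) hdisj hA hB

lemma admissible_zero (g : ℕ → ℕ) : admissible g 0 = {g} := by
  ext ω
  simp [admissible, funext_iff]

lemma admissible_one_inter_zero (g : ℕ → ℕ) :
    admissible g 1 ∩ {ω | ω 0 = 0} = {Function.update g 0 0} := by
  ext ω
  simp only [admissible, Set.mem_inter_iff, Set.mem_ofPred_eq, Set.mem_singleton_iff,
    Function.eq_update_iff]
  exact ⟨fun h => ⟨h.2, fun n hn => h.1.1 n (by omega)⟩,
    fun h => ⟨⟨fun n hn => h.2 n (by omega), fun n hn => by omega⟩, h.1⟩⟩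

theorem hasSum_admissible {p : ℕ → ℝ} (hw : ∀ n k, 0 ≤ w n k)
    (hp : ∀ n, HasSum (fun k => w n (k + 1)) (p n)) (m : ℕ) :
    HasSum (fun ω : admissible g m => prefixWeight w m ω) (transferSum p (w · 0) m) := by
  have hzero : HasSum (fun ω : admissible g 0 => prefixWeight w 0 ω) 1 := by
    rw [admissible_zero]
    exact hasSum_unique _
  induction m using Nat.twoStepInduction with
  | zero => exact hzero
  | one =>
    have hB : HasSum (fun ω : ↥(admissible g 1 ∩ {ω | ω 0 = 0}) => prefixWeight w 1 ω)
        (w 0 0) := by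
      rw [admissible_one_inter_zero]
      have hval : w 0 0 = prefixWeight w 1 (Function.update g 0 0) := by simp [prefixWeight]
      exact hval ▸ hasSum_singleton (Function.update g 0 0) (prefixWeight w 1)
    simpa [transferSum] using
      hasSum_admissible_of_pos_of_zero (hasSum_admissible_pos hw (hp 0) hzero) hB
  | more m ih ih' =>
    exact hasSum_admissible_of_pos_of_zero (hasSum_admissible_pos hw (hp (m + 1)) ih')
      (hasSum_admissible_zero (hasSum_admissible_pos hw (hp m) ih))

end TransferMatrix

/-- The eventual value `ω_{-(n+1)}` of the elements of `Ho`. -/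
def oddGround (n : ℕ) : ℕ := if (n + 1) % 2 = 1 then 1 else 0

/-- The contribution of the entry `ω_{-(n+1)} = k` to `x ^ A'(ω) * t ^ B'(ω)`. -/
noncomputable def entryWeight (x t : ℝ) (n : ℕ) : ℕ → ℝ
  | 0 => if Even n then (t ^ 2 * x ^ (n + 1))⁻¹ else 1
  | k + 1 => if Even n then (x ^ (n + 1)) ^ k else t ^ 2 * x ^ (n + 1) * (x ^ (n + 1)) ^ k

/-- The total contribution of the positive values of `ω_{-(n+1)}`, in closed form. -/
noncomputable def posEntryWeight (x t : ℝ) (n : ℕ) : ℝ :=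
  if Even n then (1 - x ^ (n + 1))⁻¹ else t ^ 2 * x ^ (n + 1) * (1 - x ^ (n + 1))⁻¹

lemma entryWeight_nonneg {x : ℝ} (hx : 0 ≤ x) (t : ℝ) (n k : ℕ) : 0 ≤ entryWeight x t n k := by
  cases k <;> rw [entryWeight] <;> split_ifs <;> positivity

lemma hasSum_entryWeight_succ {x : ℝ} (hx0 : 0 ≤ x) (hx1 : x < 1) (t : ℝ) (n : ℕ) :
    HasSum (fun k => entryWeight x t n (k + 1)) (posEntryWeight x t n) := by
  have hgeom := hasSum_geometric_of_lt_one (pow_nonneg hx0 (n + 1))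
    (pow_lt_one₀ hx0 hx1 n.succ_ne_zero)
  simp only [entryWeight, posEntryWeight]
  split_ifs
  · exact hgeom
  · exact hgeom.mul_left _

lemma zpow_finset_sum {ι G : Type*} [CommGroupWithZero G] {a : G} (ha : a ≠ 0) (s : Finset ι)
    (f : ι → ℤ) : a ^ ∑ i ∈ s, f i = ∏ i ∈ s, a ^ f i := by
  induction s using Finset.cons_induction with
  | empty => simp
  | cons i s hi ih => rw [Finset.sum_cons, Finset.prod_cons, zpow_add₀ ha, ih]

lemma zpow_mul_zpow_eq_entryWeight (x t : ℝ) (n k : ℕ) :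
    (x ^ (if (n + 1) % 2 = 0 then ((n : ℤ) + 1) * (k : ℤ) else ((n : ℤ) + 1) * ((k : ℤ) - 1))) *
      t ^ (2 * ((if (n + 1) % 2 = 0 ∧ 1 ≤ k then (1 : ℤ) else 0) -
        (if (n + 1) % 2 = 1 ∧ k = 0 then (1 : ℤ) else 0))) = entryWeight x t n k := by
  have hpow (m : ℕ) : x ^ (((n : ℤ) + 1) * m) = (x ^ (n + 1)) ^ m := by
    rw [zpow_mul]
    norm_cast
  by_cases hn : Even n
  · have hmod : (n + 1) % 2 = 1 := Nat.odd_iff.1 hn.add_one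
    cases k with
    | zero =>
      have hinv : x ^ (-1 + -(n : ℤ)) = (x ^ (n + 1))⁻¹ := by
        rw [← neg_add, zpow_neg, add_comm]
        norm_cast
      simp [entryWeight, hn, hmod, zpow_neg, hinv]
    | succ k => simp [entryWeight, hn, hmod, hpow]
  · have hmod : (n + 1) % 2 = 0 := Nat.even_iff.1 (Nat.not_even_iff_odd.1 hn).add_one
    cases k with
    | zero => simp [entryWeight, hn, hmod]
    | succ k =>
      have hsucc := hpow (k + 1)
      push_cast at hsucc
      simp [entryWeight, hn, hmod, hsucc]
      ring

lemma zpow_mul_zpow_eq_prefixWeight {x t : ℝ} (hx : x ≠ 0) (ht : t ≠ 0) {m : ℕ} {ω : ℕ → ℕ}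
    (hω : ∀ n ≥ m, ω n = oddGround n) :
    x ^ A'fun ω * t ^ B'fun ω = prefixWeight (entryWeight x t) m ω := by
  have hparity (n : ℕ) (hn : n ∉ Finset.range m) :
      (n + 1) % 2 = 0 ∧ ω n = 0 ∨ (n + 1) % 2 = 1 ∧ ω n = 1 := by
    rw [hω n (by simpa using hn), oddGround]
    split_ifs <;> omega
  have hA : A'fun ω = ∑ n ∈ Finset.range m, (if (n + 1) % 2 = 0 then ((n : ℤ) + 1) * (ω n : ℤ)
      else ((n : ℤ) + 1) * ((ω n : ℤ) - 1)) :=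
    finsum_eq_sum_of_support_subset _ fun n => not_imp_comm.1 fun hn => by
      rcases hparity n hn with h | h <;> simp [h]
  have hB : B'fun ω = ∑ n ∈ Finset.range m,
      2 * ((if (n + 1) % 2 = 0 ∧ 1 ≤ ω n then (1 : ℤ) else 0) -
        (if (n + 1) % 2 = 1 ∧ ω n = 0 then (1 : ℤ) else 0)) := by
    rw [B'fun, ← Finset.mul_sum, Finset.sum_sub_distrib]
    congr 2
    all_goals
      refine finsum_eq_sum_of_support_subset _ fun n => not_imp_comm.1 fun hn => ?_
      rcases hparity n hn with h | h <;> simp [h]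
  rw [hA, hB, zpow_finset_sum hx, zpow_finset_sum ht, ← Finset.prod_mul_distrib]
  exact Finset.prod_congr rfl fun n _ => zpow_mul_zpow_eq_entryWeight x t n (ω n)

lemma mem_admissible_oddGround_iff {N : ℕ} {ω : ℕ → ℕ} :
    ω ∈ admissible oddGround (2 * N) ↔ ω ∈ Ho ∧ ∀ n ≥ 2 * N, ω n = oddGround n := by
  refine ⟨fun ⟨htail, hprefix⟩ => ⟨⟨fun n ⟨h0, h1⟩ => ?_, 2 * N, htail⟩, htail⟩,
    fun ⟨hω, htail⟩ => ⟨htail, fun n _ => hω.1 n⟩⟩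
  rcases lt_or_ge (n + 1) (2 * N) with hn | hn
  · exact hprefix n hn ⟨h0, h1⟩
  · have hodd : (n + 1) % 2 = 1 := by
      have hg := htail (n + 1) hn
      rw [oddGround] at hg
      split_ifs at hg <;> omega
    have hg := htail n (by omega)
    rw [oddGround, if_pos hodd, h0] at hg
    exact zero_ne_one hg

lemma monotone_admissible_oddGround : Monotone fun N : ℕ => admissible oddGround (2 * N) :=
  fun M N hMN ω hω => by
    rw [mem_admissible_oddGround_iff] at hω ⊢
    exact ⟨hω.1, fun n hn => hω.2 n (by omega)⟩

lemma iUnion_admissible_oddGround : ⋃ N : ℕ, admissible oddGround (2 * N) = Ho := by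
  ext ω
  simp only [Set.mem_iUnion, mem_admissible_oddGround_iff, exists_and_left, and_iff_left_iff_imp]
  exact fun ⟨_, M, hM⟩ => ⟨M, fun n hn => hM n (by omega)⟩

lemma isChebyshevSeq_eval_S {𝕜 : Type*} [NormedField 𝕜] (u : 𝕜) :
    IsChebyshevSeq u fun j => (Polynomial.Chebyshev.S 𝕜 j).eval u := fun j => by
  simp [Polynomial.Chebyshev.S_add_one]

lemma transferSum_entryWeight_odd_add_one (x t : ℝ) (N : ℕ) :
    transferSum (posEntryWeight x t) (entryWeight x t · 0) (2 * (N + 1)) =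
      t ^ 2 * x ^ (2 * N + 2) * (1 - x ^ (2 * N + 2))⁻¹ *
          transferSum (posEntryWeight x t) (entryWeight x t · 0) (2 * N + 1) +
        (1 - x ^ (2 * N + 1))⁻¹ *
          transferSum (posEntryWeight x t) (entryWeight x t · 0) (2 * N) := by
  rw [mul_add_one, transferSum]
  simp [posEntryWeight, entryWeight]

lemma transferSum_entryWeight_even_add_one {x t : ℝ} (hx : x ≠ 0) (ht : t ≠ 0) (N : ℕ) :
    t ^ 2 * x ^ (2 * N + 3) *
        transferSum (posEntryWeight x t) (entryWeight x t · 0) (2 * (N + 1) + 1) =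
      t ^ 2 * x ^ (2 * N + 3) * ((1 - x ^ (2 * N + 3))⁻¹ *
          transferSum (posEntryWeight x t) (entryWeight x t · 0) (2 * (N + 1))) +
        (transferSum (posEntryWeight x t) (entryWeight x t · 0) (2 * (N + 1)) -
          (1 - x ^ (2 * N + 1))⁻¹ *
            transferSum (posEntryWeight x t) (entryWeight x t · 0) (2 * N)) := by
  have hne : t ^ 2 * x ^ (2 * N + 3) ≠ 0 := by positivity
  rw [← eq_sub_iff_add_eq.2 (transferSum_entryWeight_odd_add_one x t N).symm, mul_add_one,
    transferSum, mul_add]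
  simp [posEntryWeight, entryWeight, parity_simps, add_assoc, -mul_inv_rev,
    mul_inv_cancel_left₀ hne]

lemma transferSum_entryWeight {x t : ℝ} {c : ℤ → ℝ} (hx : x ≠ 0) (hx1 : ‖x‖ < 1) (ht : t ≠ 0)
    (hc : IsChebyshevSeq (t ^ 2 - 2) c) (hc0 : c 0 + c (-1) = 1) (N : ℕ) :
    transferSum (posEntryWeight x t) (entryWeight x t · 0) (2 * N) =
        (1 - x ^ (2 * N + 1)) * finiteTheta x x c N ∧
      t ^ 2 * x ^ (2 * N + 1) *
          transferSum (posEntryWeight x t) (entryWeight x t · 0) (2 * N + 1) =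
        t ^ 2 * x ^ (2 * N + 1) * finiteTheta x x c N +
          ((1 - x ^ (2 * N + 1)) * finiteTheta x x c N - finiteTheta x x c (N - 1)) := by
  induction N with
  | zero =>
    have hne : 1 - x ≠ 0 := by simpa using one_sub_pow_succ_ne_zero hx1 0
    simp only [transferSum, posEntryWeight, entryWeight, finiteTheta_zero, hc0, finiteTheta_neg_one,
      Nat.cast_zero, zero_sub, mul_zero, zero_add, pow_one, Even.zero, if_true]
    field_simp
    simp
  | succ N ih =>
    obtain ⟨ihW, ihV⟩ := ih
    have hne1 := one_sub_pow_succ_ne_zero hx1 (2 * N)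
    have hne2 := one_sub_pow_succ_ne_zero hx1 (2 * N + 1)
    have hne3 := one_sub_pow_succ_ne_zero hx1 (2 * N + 2)
    have hrec := finiteTheta_same_base_recurrence hx hx1 hc (N + 1 : ℕ)
    rw [zpow_natCast, ← pow_mul, Nat.cast_succ, add_sub_cancel_right,
      show (N : ℤ) + 1 - 2 = N - 1 by ring] at hrec
    have hW : transferSum (posEntryWeight x t) (entryWeight x t · 0) (2 * (N + 1)) =
        (1 - x ^ (2 * N + 3)) * finiteTheta x x c (N + 1) := by
      rw [transferSum_entryWeight_odd_add_one x t N, ihW, inv_mul_cancel_left₀ hne1]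
      field_simp
      linear_combination x * ihV - hrec
    have hV := transferSum_entryWeight_even_add_one hx ht N
    rw [ihW, inv_mul_cancel_left₀ hne1, hW, inv_mul_cancel_left₀ hne3] at hV
    exact ⟨by exact_mod_cast hW, by simpa [mul_add] using hV⟩

theorem statement6_general {x t : ℝ} (hx0 : 0 < x) (hx1 : x < 1) (ht : t ≠ 0) :
    HasSum (fun ω : Ho => x ^ A'fun ω.1 * t ^ B'fun ω.1)
      (qPochInf (x ^ 2) * (∏' k : ℕ, (1 + (t ^ 2 - 2) * (x ^ 2) ^ (k + 1) +
        ((x ^ 2) ^ (k + 1)) ^ 2)) / qPochInf x ^ 2) := by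
  have hx : ‖x‖ < 1 := by rwa [Real.norm_of_nonneg hx0.le]
  have hc := isChebyshevSeq_eval_S (t ^ 2 - 2)
  set c : ℤ → ℝ := fun j => (Polynomial.Chebyshev.S ℝ j).eval (t ^ 2 - 2)
  have hc0 : c 0 + c (-1) = 1 := by simp [c]
  have hnonneg (ω : ℕ → ℕ) : 0 ≤ x ^ A'fun ω * t ^ B'fun ω := by
    rw [B'fun, zpow_mul]
    exact mul_nonneg (zpow_nonneg hx0.le _) (zpow_nonneg (zpow_two_nonneg t) _)
  have hsum (N : ℕ) : HasSum (fun ω : admissible oddGround (2 * N) => x ^ A'fun ω.1 * t ^ B'fun ω.1)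
      ((1 - x ^ (2 * N + 1)) * finiteTheta x x c N) := by
    rw [← (transferSum_entryWeight hx0.ne' hx ht hc hc0 N).1]
    exact (hasSum_admissible (entryWeight_nonneg hx0.le t) (hasSum_entryWeight_succ hx0.le hx1 t)
      (2 * N)).congr_fun fun ω => zpow_mul_zpow_eq_prefixWeight hx0.ne' ht ω.2.1
  have hpow : Tendsto (fun N : ℕ => 1 - x ^ (2 * N + 1)) atTop (𝓝 (1 - 0)) :=
    ((tendsto_pow_atTop_nhds_zero_of_lt_one hx0.le hx1).comp
      (tendsto_atTop_mono (fun N => show N ≤ 2 * N + 1 by omega) tendsto_id)).const_sub 1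
  have hlim := hpow.mul
    ((tendsto_finiteTheta_same_base hx0.ne' hx hc).comp tendsto_natCast_atTop_atTop)
  rw [hc0, sub_zero, one_mul, one_mul] at hlim
  rw [← iUnion_admissible_oddGround]
  exact hasSum_iUnion_of_tendsto hnonneg monotone_admissible_oddGround hsum hlim

theorem statement6 (q : ℝ) (hq0 : 0 < q) (hq1 : q < 1) :
    Multipliable (fun j : ℕ => 1 - q ^ (2 * (j + 1))) ∧
    Sodd (q ^ 4) (q + q⁻¹) = ((1 + q ^ 2) * ∏' j : ℕ, (1 - q ^ (2 * (j + 1))))⁻¹ := by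
  have hq : ‖q‖ < 1 := by rwa [Real.norm_of_nonneg hq0.le]
  have hsum := statement6_general (pow_pos hq0 4) (pow_lt_one₀ hq0.le hq1 four_ne_zero)
    (by positivity : q + q⁻¹ ≠ 0)
  exact ⟨by simpa only [pow_mul] using multipliable_one_sub_pow_succ (norm_sq_lt_one hq),
    hsum.tsum_eq.trans (qPochInf_mul_tprod_div_sq_add_inv hq0.ne' hq)⟩
end
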